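/- Let w be a double occurrence word on an n-element set V. Then every transversal n×n submatrix of the integer matrix IAS_w has determinant equal to −1, 0, or 1. -/

import Mathlib

open Matrix

noncomputable section

/-- `w` is a double occurrence word on `V`: each element of `V` occurs exactly twice. -/
def IsDOW {V : Type*} [DecidableEq V] (w : List V) : Prop := ∀ v : V, w.count v = 2

/-- Distinct `u` and `v` are interlaced in `w`: their occurrences appear in the order
`u v u v` or `v u v u`. -/
def Interlaced {V : Type*} (w : List V) (u v : V) : Prop :=
  [u, v, u, v].Sublist w ∨ [v, u, v, u].Sublist w

/-- The position of the first occurrence `v⁻` of `v` in `w`. -/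
def fstIdx {V : Type*} [DecidableEq V] (w : List V) (v : V) : ℕ :=
  w.findIdx (fun x => decide (x = v))

/-- The position of the second occurrence `v⁺` of `v` in `w`. -/
def sndIdx {V : Type*} [DecidableEq V] (w : List V) (v : V) : ℕ :=
  fstIdx w v + 1 + (w.drop (fstIdx w v + 1)).findIdx (fun x => decide (x = v))

/-- Position `k` lies in the interior of `v` in `w`, i.e. strictly between `v⁻` and `v⁺`. -/
def inInterior {V : Type*} [DecidableEq V] (w : List V) (v : V) (k : ℕ) : Prop :=
  fstIdx w v < k ∧ k < sndIdx w v

instance {V : Type*} [DecidableEq V] (w : List V) (v : V) (k : ℕ) :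
    Decidable (inInterior w v k) := by unfold inInterior; infer_instance

/-- The integer matrix `IAS_w = (I | A | B)` associated with a double occurrence word `w`;
the columns `(u,0)`, `(u,1)`, `(u,2)` are the `φ`, `χ`, `ψ` columns of `u`. -/
def IASword {V : Type*} [DecidableEq V] (w : List V) : Matrix V (V × Fin 3) ℤ :=
  Matrix.of fun v p =>
    if p.2 = 0 then (if v = p.1 then 1 else 0)
    else if p.2 = 1 then
      (if v = p.1 then 0 else
        (if inInterior w v (sndIdx w p.1) then 1 else 0)
          - (if inInterior w v (fstIdx w p.1) then 1 else 0))
    else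
      (if v = p.1 then 1 else
        (if inInterior w v (fstIdx w p.1) then 1 else 0)
          + (if inInterior w v (sndIdx w p.1) then 1 else 0))



/-- Rows of network form: at most one `+1` and at most one `-1`. -/
def NetRow {ι : Type*} (r : ι → ℤ) : Prop :=
  ∃ A B : Set ι, A.Subsingleton ∧ B.Subsingleton ∧
    ∀ j, r j = A.indicator (fun _ => (1 : ℤ)) j - B.indicator (fun _ => (1 : ℤ)) j

lemma NetRow.comp {ι κ : Type*} {r : ι → ℤ} (h : NetRow r) {f : κ → ι}
    (hf : Function.Injective f) : NetRow (fun j => r (f j)) := by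
  obtain ⟨A, B, hA, hB, h⟩ := h
  exact ⟨f ⁻¹' A, f ⁻¹' B, hA.preimage hf, hB.preimage hf, fun j => h (f j)⟩

lemma sum_indicator_singleton {n : ℕ} (a : Fin n) (f : Fin n → ℤ) :
    ∑ j, ({a} : Set (Fin n)).indicator (fun _ => (1 : ℤ)) j * f j = f a := by
  rw [Finset.sum_eq_single a]
  · simp
  · intro b _ hb
    simp [hb]
  · simp

lemma netRow_cases {n : ℕ} {r : Fin n → ℤ} (h : NetRow r) :
    (∑ j, r j = 0) ∨ (∃ a, (∀ j, j ≠ a → r j = 0) ∧ (r a = 1 ∨ r a = -1)) := by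
  obtain ⟨A, B, hA, hB, h⟩ := h
  rcases hA.eq_empty_or_singleton with rfl | ⟨a, rfl⟩ <;>
  rcases hB.eq_empty_or_singleton with rfl | ⟨b, rfl⟩
  · left; simp [h]
  · right
    refine ⟨b, fun j hj => ?_, ?_⟩
    · simp [h, hj]
    · right; simp [h]
  · right
    refine ⟨a, fun j hj => ?_, ?_⟩
    · simp [h, hj]
    · left; simp [h]
  · left
    have h1 := sum_indicator_singleton a (fun _ => 1)
    have h2 := sum_indicator_singleton b (fun _ => 1)
    simp only [mul_one] at h1 h2
    simp only [h, Finset.sum_sub_distrib, h1, h2, sub_self]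

lemma net_det : ∀ (n : ℕ) (M : Matrix (Fin n) (Fin n) ℤ), (∀ i, NetRow (M i)) →
    M.det = -1 ∨ M.det = 0 ∨ M.det = 1 := by
  intro n
  induction n with
  | zero => intro M _; right; right; simp
  | succ n ih =>
    intro M hM
    by_cases hall : ∀ i, ∑ j, M i j = 0
    · right; left
      apply Matrix.exists_mulVec_eq_zero_iff.mp
      refine ⟨fun _ => 1, ?_, ?_⟩
      · intro h
        have := congrFun h 0
        simp at this
      · ext i
        simp [Matrix.mulVec, dotProduct, hall]
    · push Not at hall
      obtain ⟨i, hi⟩ := hall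
      rcases netRow_cases (hM i) with h | ⟨a, h0, h1⟩
      · exact absurd h hi
      rw [Matrix.det_succ_row M i, Finset.sum_eq_single a]
      · have := ih (M.submatrix i.succAbove a.succAbove)
          (fun k => (hM (i.succAbove k)).comp Fin.succAbove_right_injective)
        rcases neg_one_pow_eq_or ℤ ((i : ℕ) + (a : ℕ)) with e | e <;>
        rcases h1 with h1 | h1 <;> rcases this with h2 | h2 | h2 <;>
          simp [e, h1, h2]
      · intro b _ hb
        simp [h0 b hb]
      · simp

lemma net_det' {ι : Type*} [Fintype ι] [DecidableEq ι] (M : Matrix ι ι ℤ)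
    (h : ∀ i, NetRow (M i)) : M.det = -1 ∨ M.det = 0 ∨ M.det = 1 := by
  have e := Fintype.equivFin ι
  rw [← Matrix.det_submatrix_equiv_self e.symm M]
  exact net_det _ _ fun i => (h (e.symm i)).comp e.symm.injective

section positions
variable {V : Type} [DecidableEq V]

lemma fst_getElem? (w : List V) (hw : IsDOW w) (v : V) : w[fstIdx w v]? = some v := by
  have hm : v ∈ w := List.count_pos_iff.mp (by rw [hw v]; norm_num)
  have hlt : fstIdx w v < w.length := by
    unfold fstIdx
    rw [List.findIdx_lt_length]
    exact ⟨v, hm, by simp⟩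
  rw [List.getElem?_eq_getElem hlt]
  have h2 := List.findIdx_getElem (p := fun x => decide (x = v)) (xs := w) (w := hlt)
  have h3 := of_decide_eq_true h2
  exact congrArg some h3

lemma snd_getElem? (w : List V) (hw : IsDOW w) (v : V) : w[sndIdx w v]? = some v := by
  have hf := fst_getElem? w hw v
  have hm : v ∈ w.drop (fstIdx w v + 1) := by
    apply List.count_pos_iff.mp
    have h1 : (w.take (fstIdx w v + 1)).count v + (w.drop (fstIdx w v + 1)).count v = 2 := by
      rw [← List.count_append, List.take_append_drop, hw v]
    have h2 : (w.take (fstIdx w v)).count v = 0 := by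
      rw [List.count_eq_zero]
      intro hmem
      obtain ⟨k, hk, hkv⟩ := List.mem_iff_getElem.mp hmem
      rw [List.length_take] at hk
      have hk1 : k < fstIdx w v := by omega
      have := List.not_of_lt_findIdx (p := fun x => decide (x = v)) (xs := w) hk1
      rw [List.getElem_take] at hkv
      simp [hkv] at this
    rw [List.take_add_one, List.count_append, h2, hf] at h1
    simp at h1
    omega
  have hlt : (w.drop (fstIdx w v + 1)).findIdx (fun x => decide (x = v))
      < (w.drop (fstIdx w v + 1)).length := by
    rw [List.findIdx_lt_length]
    exact ⟨v, hm, by simp⟩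
  have := List.findIdx_getElem (w := hlt)
  unfold sndIdx
  rw [← List.getElem?_drop, List.getElem?_eq_getElem hlt]
  simpa using this

lemma fst_lt_snd (w : List V) (v : V) : fstIdx w v < sndIdx w v := by
  unfold sndIdx; omega

/-- Position of an occurrence. -/
def pos (w : List V) : V ⊕ V → ℕ := Sum.elim (fstIdx w) (sndIdx w)

lemma pos_inj (w : List V) (hw : IsDOW w) : Function.Injective (pos w) := by
  have key : ∀ p q : V ⊕ V, pos w p = pos w q → Sum.elim id id p = Sum.elim id id q := by
    intro p q h
    have hp : ∀ p : V ⊕ V, w[pos w p]? = some (Sum.elim id id p) := by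
      rintro (v | v)
      · exact fst_getElem? w hw v
      · exact snd_getElem? w hw v
    have h1 := hp p
    rw [h, hp q] at h1
    exact (Option.some.inj h1).symm
  intro p q h
  have hk := key p q h
  rcases p with u | u <;> rcases q with v | v <;> simp only [Sum.elim_inl, Sum.elim_inr, id] at hk <;>
    subst hk
  · rfl
  · have := fst_lt_snd w u
    simp [pos] at h; omega
  · have := fst_lt_snd w u
    simp [pos] at h; omega
  · rfl

lemma pos_surj [Fintype V] (w : List V) (hw : IsDOW w) (k : ℕ) (hk : k < w.length) :
    ∃ p, pos w p = k := by
  have hlt : ∀ p, pos w p < w.length := by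
    rintro (v | v)
    · exact (List.getElem?_eq_some_iff.mp (fst_getElem? w hw v)).1
    · exact (List.getElem?_eq_some_iff.mp (snd_getElem? w hw v)).1
  have hinj : Function.Injective (fun p => (⟨pos w p, hlt p⟩ : Fin w.length)) := by
    intro p q h
    exact pos_inj w hw (by simpa using h)
  have hcard : Fintype.card (V ⊕ V) = Fintype.card (Fin w.length) := by
    have h := Multiset.sum_count_eq_card (s := Finset.univ) (m := (w : Multiset V))
      (fun a _ => Finset.mem_univ a)
    simp only [Multiset.coe_count, Multiset.coe_card] at h
    rw [Fintype.card_fin, ← h, Fintype.card_sum]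
    simp [hw _, Finset.sum_const]
    omega
  have hb := (Fintype.bijective_iff_injective_and_card _).mpr ⟨hinj, hcard⟩
  obtain ⟨p, hp⟩ := hb.2 ⟨k, hk⟩
  exact ⟨p, by simpa using hp⟩

lemma pos_pred [Fintype V] (w : List V) (hw : IsDOW w) (i : V ⊕ V) (hi : pos w i ≠ 0) :
    ∃ p, pos w p + 1 = pos w i := by
  have hlt : pos w i < w.length := by
    rcases i with v | v
    · exact (List.getElem?_eq_some_iff.mp (fst_getElem? w hw v)).1
    · exact (List.getElem?_eq_some_iff.mp (snd_getElem? w hw v)).1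
  obtain ⟨p, hp⟩ := pos_surj w hw (pos w i - 1) (by omega)
  exact ⟨p, by omega⟩

/-- Values on the edge just after a position. -/
def Qm (w : List V) : Matrix (V ⊕ V) (V ⊕ V) ℤ := Matrix.of fun r q =>
  Sum.elim (fun v => if fstIdx w v ≤ pos w q ∧ pos w q < sndIdx w v then 1 else 0)
    (fun v => if sndIdx w v ≤ pos w q then 1 else 0) r

/-- Values on the edge just before a position. -/
def Gm (w : List V) : Matrix (V ⊕ V) (V ⊕ V) ℤ := Matrix.of fun r q =>
  Sum.elim (fun v => if fstIdx w v < pos w q ∧ pos w q ≤ sndIdx w v then 1 else 0)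
    (fun v => if sndIdx w v < pos w q then 1 else 0) r

/-- Predecessor matrix. -/
def Pm (w : List V) : Matrix (V ⊕ V) (V ⊕ V) ℤ := Matrix.of fun p q =>
  if pos w p + 1 = pos w q then 1 else 0

lemma Q_mul_P [Fintype V] (w : List V) (hw : IsDOW w) : Qm w * Pm w = Gm w := by
  ext r i
  rw [Matrix.mul_apply]
  by_cases hi : pos w i = 0
  · have h1 : ∀ p, Pm w p i = 0 := by
      intro p
      simp [Pm, hi]
    simp only [h1, mul_zero, Finset.sum_const_zero]
    rcases r with v | v <;> simp [Gm, hi]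
  · obtain ⟨p, hp⟩ := pos_pred w hw i hi
    rw [Finset.sum_eq_single p]
    · rcases r with v | v <;> simp only [Qm, Pm, Gm, Matrix.of_apply, Sum.elim_inl, Sum.elim_inr, ← hp,
        if_true, mul_one] <;> congr 1 <;> apply propext <;> omega
    · intro q _ hq
      have : pos w q + 1 ≠ pos w i := fun h => hq (pos_inj w hw (by omega))
      simp [Pm, this]
    · simp

lemma pos_facts (w : List V) (hw : IsDOW w) (u v : V) (h : u ≠ v) :
    fstIdx w u ≠ fstIdx w v ∧ fstIdx w u ≠ sndIdx w v ∧ sndIdx w u ≠ fstIdx w v ∧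
      sndIdx w u ≠ sndIdx w v := by
  have hi := pos_inj w hw
  refine ⟨fun e => ?_, fun e => ?_, fun e => ?_, fun e => ?_⟩
  · exact h (Sum.inl.inj (@hi (Sum.inl u) (Sum.inl v) e))
  · have := @hi (Sum.inl u) (Sum.inr v) e
    simp at this
  · have := @hi (Sum.inr u) (Sum.inl v) e
    simp at this
  · exact h (Sum.inr.inj (@hi (Sum.inr u) (Sum.inr v) e))

lemma Q_sub_G (w : List V) (hw : IsDOW w) :
    Qm w - Gm w = Matrix.fromBlocks 1 (-1) 0 1 := by
  ext r i
  rcases r with v | v <;> rcases i with u | u <;>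
    have h1 := fst_lt_snd w u <;> have h2 := fst_lt_snd w v <;>
    by_cases h : v = u <;>
    first
    | (subst h
       simp only [Qm, Gm, pos, Matrix.sub_apply, Matrix.of_apply, Sum.elim_inl, Sum.elim_inr,
         Matrix.fromBlocks_apply₁₁, Matrix.fromBlocks_apply₁₂, Matrix.fromBlocks_apply₂₁,
         Matrix.fromBlocks_apply₂₂, Matrix.neg_apply, Matrix.one_apply_eq, Matrix.zero_apply]
       split_ifs <;> omega)
    | (obtain ⟨a, b, c, d⟩ := pos_facts w hw v u h
       simp only [Qm, Gm, pos, Matrix.sub_apply, Matrix.of_apply, Sum.elim_inl, Sum.elim_inr,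
         Matrix.fromBlocks_apply₁₁, Matrix.fromBlocks_apply₁₂, Matrix.fromBlocks_apply₂₁,
         Matrix.fromBlocks_apply₂₂, Matrix.neg_apply, Matrix.one_apply_ne h, Matrix.zero_apply]
       split_ifs <;> omega)

lemma det_Q [Fintype V] (w : List V) (hw : IsDOW w) : IsUnit (Qm w).det := by
  have h : Qm w * (1 - Pm w) = Matrix.fromBlocks 1 (-1) 0 1 := by
    rw [mul_sub, mul_one, Q_mul_P w hw, Q_sub_G w hw]
  have h2 := congrArg Matrix.det h
  rw [Matrix.det_mul, Matrix.det_fromBlocks_zero₂₁] at h2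
  simp only [Matrix.det_one, mul_one] at h2
  exact IsUnit.of_mul_eq_one _ h2

/-- The column (transition) containing the outgoing half-edge. -/
def oc (t : V → Fin 3) : V ⊕ V → V ⊕ V :=
  Sum.elim (fun v => if t v = 1 then Sum.inr v else Sum.inl v)
    (fun v => if t v = 0 then Sum.inr v else Sum.inl v)

/-- The column (transition) containing the incoming half-edge. -/
def ic (t : V → Fin 3) : V ⊕ V → V ⊕ V :=
  Sum.elim (fun v => if t v = 2 then Sum.inr v else Sum.inl v) Sum.inr

/-- Function matrix. -/
def Fm (f : V ⊕ V → V ⊕ V) : Matrix (V ⊕ V) (V ⊕ V) ℤ := Matrix.of fun p c =>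
  if f p = c then 1 else 0

lemma net_N [Fintype V] (w : List V) (hw : IsDOW w) (t : V → Fin 3) (p : V ⊕ V) :
    NetRow ((Fm (oc t) - Pm w * Fm (ic t)) p) := by
  classical
  refine ⟨{oc t p}, {c | ∃ i, pos w p + 1 = pos w i ∧ ic t i = c},
    Set.subsingleton_singleton, ?_, ?_⟩
  · rintro c ⟨i, hi, rfl⟩ d ⟨j, hj, rfl⟩
    rw [pos_inj w hw (hi.symm.trans hj)]
  · intro c
    rw [Matrix.sub_apply]
    congr 1
    · simp [Fm, Set.indicator_apply, eq_comm]
    · rw [Matrix.mul_apply, Set.indicator_apply]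
      split_ifs with h
      · obtain ⟨i, hi, hc⟩ := h
        rw [Finset.sum_eq_single i]
        · simp [Pm, Fm, hi, hc]
        · intro j _ hj
          have : pos w p + 1 ≠ pos w j := fun h => hj (pos_inj w hw (by omega))
          simp [Pm, this]
        · simp
      · apply Finset.sum_eq_zero
        intro i _
        by_cases h1 : pos w p + 1 = pos w i
        · have : ic t i ≠ c := fun h2 => h ⟨i, h1, h2⟩
          simp [Fm, this]
        · simp [Pm, h1]

lemma mul_F [Fintype V] (X : Matrix (V ⊕ V) (V ⊕ V) ℤ) (f : V ⊕ V → V ⊕ V)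
    (hf : ∀ p, Sum.elim id id (f p) = Sum.elim id id p) (r c : V ⊕ V) :
    (X * Fm f) r c =
      (if f (Sum.inl (Sum.elim id id c)) = c then X r (Sum.inl (Sum.elim id id c)) else 0) +
      (if f (Sum.inr (Sum.elim id id c)) = c then X r (Sum.inr (Sum.elim id id c)) else 0) := by
  rw [Matrix.mul_apply, Fintype.sum_sum_type]
  congr 1
  · rw [Finset.sum_eq_single (Sum.elim id id c)]
    · simp [Fm]
    · intro b _ hb
      have : f (Sum.inl b) ≠ c := by
        rintro rfl
        exact hb (by simpa using (hf (Sum.inl b)).symm)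
      simp [Fm, this]
    · simp
  · rw [Finset.sum_eq_single (Sum.elim id id c)]
    · simp [Fm]
    · intro b _ hb
      have : f (Sum.inr b) ≠ c := by
        rintro rfl
        exact hb (by simpa using (hf (Sum.inr b)).symm)
      simp [Fm, this]
    · simp

lemma oc_proj (t : V → Fin 3) (p : V ⊕ V) :
    Sum.elim id id (oc t p) = Sum.elim id id p := by
  rcases p with v | v <;> simp only [oc, Sum.elim_inl, Sum.elim_inr] <;> split_ifs <;> rfl

lemma ic_proj (t : V → Fin 3) (p : V ⊕ V) :
    Sum.elim id id (ic t p) = Sum.elim id id p := by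
  rcases p with v | v <;> simp only [ic, Sum.elim_inl, Sum.elim_inr] <;> try split_ifs
  all_goals rfl

lemma QN_apply [Fintype V] (w : List V) (hw : IsDOW w) (t : V → Fin 3) (r : V ⊕ V) (u : V) :
    (Qm w * (Fm (oc t) - Pm w * Fm (ic t))) r (Sum.inl u) =
      (if t u = 0 then Qm w r (Sum.inl u) - Gm w r (Sum.inl u)
       else if t u = 1 then Qm w r (Sum.inr u) - Gm w r (Sum.inl u)
       else Qm w r (Sum.inl u) + Qm w r (Sum.inr u)) ∧
    (Qm w * (Fm (oc t) - Pm w * Fm (ic t))) r (Sum.inl u) +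
      (Qm w * (Fm (oc t) - Pm w * Fm (ic t))) r (Sum.inr u) =
      (Qm w - Gm w) r (Sum.inl u) + (Qm w - Gm w) r (Sum.inr u) := by
  rw [mul_sub, ← Matrix.mul_assoc, Q_mul_P w hw]
  simp only [Matrix.sub_apply, mul_F _ _ (oc_proj t), mul_F _ _ (ic_proj t)]
  have h3 : t u = 0 ∨ t u = 1 ∨ t u = 2 := by
    generalize t u = x
    fin_cases x <;> simp
  rcases h3 with h | h | h <;> simp [oc, ic, h] <;> ring

lemma T_entry (w : List V) (hw : IsDOW w) (t : V → Fin 3) (v u : V) :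
    (if t u = 0 then Qm w (Sum.inl v) (Sum.inl u) - Gm w (Sum.inl v) (Sum.inl u)
       else if t u = 1 then Qm w (Sum.inl v) (Sum.inr u) - Gm w (Sum.inl v) (Sum.inl u)
       else Qm w (Sum.inl v) (Sum.inl u) + Qm w (Sum.inl v) (Sum.inr u)) =
    IASword w v (u, t u) := by
  have h1 := fst_lt_snd w u
  have h2 := fst_lt_snd w v
  simp only [IASword, Qm, Gm, pos, Matrix.of_apply, Sum.elim_inl, Sum.elim_inr, inInterior]
  by_cases h : v = u
  · subst h
    simp only [if_true]
    split_ifs <;> omega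
  · obtain ⟨a, b, c, d⟩ := pos_facts w hw v u h
    simp only [if_neg h]
    split_ifs <;> omega

lemma factor [Fintype V] (w : List V) (hw : IsDOW w) (t : V → Fin 3) :
    ∃ Y : Matrix V V ℤ, Qm w * (Fm (oc t) - Pm w * Fm (ic t)) * Matrix.fromBlocks 1 1 0 1 =
      Matrix.fromBlocks (Matrix.of fun v u => IASword w v (u, t u)) 0 Y 1 := by
  have hQN := QN_apply w hw t
  generalize Qm w * (Fm (oc t) - Pm w * Fm (ic t)) = Z at hQN ⊢
  refine ⟨Z.toBlocks₂₁, ?_⟩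
  rw [Q_sub_G w hw] at hQN
  conv_lhs => rw [← Matrix.fromBlocks_toBlocks Z]
  rw [Matrix.fromBlocks_multiply]
  simp only [mul_one, mul_zero, add_zero]
  congr 1
  · ext v u
    rw [Matrix.of_apply, ← T_entry w hw t v u]
    exact (hQN (Sum.inl v) u).1
  · ext v u
    have := (hQN (Sum.inl v) u).2
    simpa [Matrix.toBlocks₁₁, Matrix.toBlocks₁₂] using this
  · ext v u
    have := (hQN (Sum.inr v) u).2
    simpa [Matrix.toBlocks₂₁, Matrix.toBlocks₂₂] using this

end positions

/-- Every transversal `n × n` submatrix of the integer matrix `IAS_w` of a double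
occurrence word has determinant `-1`, `0`, or `1`. -/
theorem IASword_transversal_unimodular
    {V : Type} [Fintype V] [DecidableEq V] (w : List V) (hw : IsDOW w)
    (t : V → Fin 3) :
    (Matrix.of fun v u => IASword w v (u, t u)).det ∈ ({-1, 0, 1} : Set ℤ) := by
  obtain ⟨Y, hY⟩ := factor w hw t
  have hd := congrArg Matrix.det hY
  rw [Matrix.det_mul, Matrix.det_mul, Matrix.det_fromBlocks_zero₂₁,
    Matrix.det_fromBlocks_zero₁₂] at hd
  simp only [Matrix.det_one, mul_one] at hd
  rw [← hd]
  have hn := net_det' _ (net_N w hw t)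
  rcases Int.isUnit_iff.mp (det_Q w hw) with hq | hq <;> rcases hn with h | h | h <;>
    simp [hq, h]
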